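/- Counterexample (main claim): for every q, p with 1 ≤ q < p < ∞ there exist a lattice (the tri-adic intervals in [0,1)), positive measures μ (Lebesgue measure on [0,1)) and ν (the 1/3-Cantor measure), nonnegative constants α = {α_I} given by α_I = (2/3)^{n/p} if I is a tri-adic interval of length 3^{-n} contained in C_n and α_I = 0 otherwise, such that the testing condition ∫_J (Σ_{I ⊆ J} α_I^q 1_I)^{p/q} dν ≤ C₁^p μ(J) holds for all tri-adic J with a finite constant C₁, yet there is NO finite constant C with ∫ (Σ_I |α_I E_I^μ f|^q)^{p/q} dν ≤ C^p ∫ |f|^p dμ for all f ∈ L^p(μ). -/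

import Mathlib

open MeasureTheory ENNReal NNReal Set Filter
open scoped Classical

/-- The tri-adic interval `[k·3⁻ⁿ, (k+1)·3⁻ⁿ)`. -/
noncomputable def triadic (n k : ℕ) : Set ℝ :=
  Ico ((k : ℝ) * 3 ^ (-(n : ℤ))) (((k : ℝ) + 1) * 3 ^ (-(n : ℤ)))

/-- The left endpoint `∑_j ε_j 3^{-(j+1)}` (with digits `ε_j ∈ {0,2}`) of a component of
the `n`-th step `C_n` of the 1/3-Cantor set construction. -/
noncomputable def cantorBase {n : ℕ} (ε : Fin n → Bool) : ℝ :=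
  ∑ j : Fin n, (if ε j then 2 else 0) * (3 : ℝ) ^ (-((j : ℕ) : ℤ) - 1)

/-- The connected component of `C_n` with digits `ε`. -/
noncomputable def cantorPiece {n : ℕ} (ε : Fin n → Bool) : Set ℝ :=
  Ico (cantorBase ε) (cantorBase ε + 3 ^ (-(n : ℤ)))

/-- The `n`-th step `C_n` of the 1/3-Cantor set construction: `C_0 = [0,1)`,
`C_1 = [0,1/3) ∪ [2/3,1)`, etc. -/
noncomputable def cantorN (n : ℕ) : Set ℝ := ⋃ ε : Fin n → Bool, cantorPiece ε

/-- The 1/3-Cantor set (made of half-open intervals): `C = ⋂_n C_n`. -/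
noncomputable def cexCantorSet : Set ℝ := ⋂ n, cantorN n

/-- The middle-third gap of the component of `C_m` with digits `ε`: a maximal tri-adic
interval of `[0,1) \ C` of length `3^{-(m+1)}`. -/
noncomputable def gapPiece {m : ℕ} (ε : Fin m → Bool) : Set ℝ :=
  Ico (cantorBase ε + 3 ^ (-(m + 1 : ℤ))) (cantorBase ε + 2 * 3 ^ (-(m + 1 : ℤ)))

/-- The coefficients of the counterexample: `α_I = (2/3)^{n/p}` if `I` is a tri-adic
interval of length `3⁻ⁿ` contained in `C_n`, and `α_I = 0` otherwise. -/
noncomputable def cexAlpha (p : ℝ) (n k : ℕ) : ℝ≥0∞ :=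
  if triadic n k ⊆ cantorN n then ENNReal.ofReal ((2 / 3 : ℝ) ^ ((n : ℝ) / p)) else 0

/-- The function of the counterexample: `f = (3/2)^{m/p} · m^{-r}` on each maximal
tri-adic gap interval of `[0,1) \ C` of length `3^{-m}`, and `f = 0` on `C`. -/
noncomputable def cexF (p r : ℝ) : ℝ → ℝ≥0∞ := fun x =>
  ∑' s : Σ m : ℕ, Fin m → Bool,
    (gapPiece s.2).indicator
      (fun _ => ENNReal.ofReal ((3 / 2 : ℝ) ^ (((s.1 : ℝ) + 1) / p) *
        ((s.1 : ℝ) + 1) ^ (-r))) x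

/-- The averaging operator `E_I^μ f = (μ(I)⁻¹ ∫_I f dμ) · 1_I`. -/
noncomputable def avgOp (μ : Measure ℝ) (I : Set ℝ) (f : ℝ → ℝ≥0∞) : ℝ → ℝ≥0∞ :=
  I.indicator fun _ => (∫⁻ y in I, f y ∂μ) / μ I

/-- Lebesgue measure restricted to `[0,1)`. -/
noncomputable def cexMu : Measure ℝ := volume.restrict (Ico (0 : ℝ) 1)

/-!
Since `α_I ^ p = (2 / 3) ^ n`, `ν I = 2 ^ (-n)` and `μ I = 3 ^ (-n)` for a component `I` of `C_n`,
we have `α_I ^ p * ν I = μ I`. The testing sum over `I ⊆ J` is a geometric series, comparable to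
its first term `α_J ^ q`, so the testing condition holds.

The embedding fails for `f = cexF p r` with `1 / p < r ≤ 1 / q`. The `2 ^ (m - 1)` gaps of length
`3 ^ (-m)` contribute `m ^ (-r * p) / 2` to the integral of `f ^ p`, which is therefore finite as
`r * p > 1`. A component `I` of `C_n` contains a gap of a third of its length, whence
`α_I * E_I f ≥ (n + 1) ^ (-r) / 3` on `I`. As `r * q ≤ 1`, the `q`-th powers of these terms sum to
`∞` at every point of the Cantor set, which carries all of `ν`.
-/

open scoped Function

section DisjointIndicators

variable {ι X M : Type*} {s : ι → Set X} {x : X}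

lemma tsum_indicator_eq_of_mem [AddCommMonoid M] [TopologicalSpace M]
    (hs : Pairwise (Disjoint on s)) (f : ι → X → M) {i : ι} (hx : x ∈ s i) :
    ∑' j, (s j).indicator (f j) x = f i x := by
  rw [tsum_eq_single i fun j hj => indicator_of_notMem (disjoint_right.1 (hs hj) hx) _,
    indicator_of_mem hx]

lemma tsum_indicator_le {f : ι → X → ℝ≥0∞} {c : ℝ≥0∞} (hs : Pairwise (Disjoint on s))
    (hf : ∀ i, f i x ≤ c) : ∑' i, (s i).indicator (f i) x ≤ c := by
  by_cases hx : ∃ i, x ∈ s i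
  · obtain ⟨i, hi⟩ := hx
    exact (tsum_indicator_eq_of_mem hs f hi).trans_le (hf i)
  · push Not at hx
    simp [hx]

lemma tsum_indicator_rpow {p : ℝ} (hp : 0 < p) (hs : Pairwise (Disjoint on s))
    (f : ι → X → ℝ≥0∞) (x : X) :
    (∑' i, (s i).indicator (f i) x) ^ p = ∑' i, (s i).indicator (fun y => f i y ^ p) x := by
  by_cases hx : ∃ i, x ∈ s i
  · obtain ⟨i, hi⟩ := hx
    rw [tsum_indicator_eq_of_mem hs f hi, tsum_indicator_eq_of_mem hs _ hi]
  · push Not at hx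
    simp [hx, hp]

end DisjointIndicators

lemma lintegral_tsum_indicator_const {ι X : Type*} [Countable ι] [MeasurableSpace X]
    (μ : Measure X) {s : ι → Set X} (hs : ∀ i, MeasurableSet (s i)) (c : ι → ℝ≥0∞) :
    ∫⁻ x, ∑' i, (s i).indicator (fun _ => c i) x ∂μ = ∑' i, c i * μ (s i) := by
  rw [lintegral_tsum fun i => (measurable_const.indicator (hs i)).aemeasurable]
  simp only [lintegral_indicator_const (hs _)]

lemma tsum_ofReal_natCast_add_one_rpow_ne_top_iff {s : ℝ} :
    ∑' m : ℕ, ENNReal.ofReal (((m : ℝ) + 1) ^ s) ≠ ∞ ↔ s < -1 := by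
  have hiff : Summable (fun m : ℕ => ((m : ℝ) + 1) ^ s) ↔ s < -1 := by
    simpa using (_root_.summable_nat_add_iff (f := fun m : ℕ => (m : ℝ) ^ s) 1).trans
      Real.summable_nat_rpow
  rw [← hiff]
  refine ⟨fun h => ?_, Summable.tsum_ofReal_ne_top⟩
  refine (ENNReal.summable_toReal h).congr fun m => ?_
  exact ENNReal.toReal_ofReal (by positivity)

lemma tsum_ite_le_pow (r : ℝ≥0∞) (n : ℕ) :
    ∑' m, (if n ≤ m then r ^ m else 0) = r ^ n * (1 - r)⁻¹ := by
  have hinit : ∑ m ∈ Finset.range n, (if n ≤ m then r ^ m else 0) = 0 :=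
    Finset.sum_eq_zero fun m hm => if_neg (Finset.mem_range.1 hm).not_ge
  rw [← ENNReal.summable.sum_add_tsum_nat_add' (k := n), hinit, zero_add,
    ← ENNReal.tsum_geometric, ← ENNReal.tsum_mul_left]
  simp [pow_add, mul_comm]

lemma three_zpow_neg_add_one (n : ℕ) : (3 : ℝ) ^ (-((n : ℤ) + 1)) = 3 ^ (-(n : ℤ)) / 3 := by
  rw [neg_add, zpow_add₀ three_ne_zero, zpow_neg_one, div_eq_mul_inv]

lemma ofReal_three_zpow_neg (n : ℕ) : ENNReal.ofReal (3 ^ (-(n : ℤ))) = 3⁻¹ ^ n := by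
  rw [zpow_neg, zpow_natCast, ← inv_pow, ENNReal.ofReal_pow (by positivity),
    ENNReal.ofReal_inv_of_pos three_pos, ENNReal.ofReal_ofNat]

section Triadic

variable {m j n k : ℕ}

lemma volume_triadic (n k : ℕ) : volume (triadic n k) = 3⁻¹ ^ n := by
  rw [triadic, Real.volume_Ico, ← sub_mul, add_sub_cancel_left, one_mul, ofReal_three_zpow_neg]

lemma triadic_nonempty (n k : ℕ) : (triadic n k).Nonempty := by
  refine nonempty_Ico.2 ?_
  gcongr
  linarith

lemma mem_triadic_iff {x : ℝ} : x ∈ triadic n k ↔ ⌊x * 3 ^ n⌋ = k := by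
  rw [triadic, mem_Ico, zpow_neg, zpow_natCast, ← div_eq_mul_inv, ← div_eq_mul_inv,
    div_le_iff₀ (by positivity), lt_div_iff₀ (by positivity), Int.floor_eq_iff, Int.cast_natCast]

lemma pairwise_disjoint_triadic (n : ℕ) : Pairwise (Disjoint on triadic n) := by
  refine fun j k hjk => disjoint_left.2 fun x hj hk => hjk ?_
  exact_mod_cast (mem_triadic_iff.1 hj).symm.trans (mem_triadic_iff.1 hk)

lemma le_of_triadic_subset_triadic (h : triadic m j ⊆ triadic n k) : n ≤ m := by
  have hends := (Ico_subset_Ico_iff (nonempty_Ico.1 (triadic_nonempty m j))).1 h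
  have hlength : (3 : ℝ) ^ (-(m : ℤ)) ≤ 3 ^ (-(n : ℤ)) := by linarith [hends.1, hends.2]
  rw [zpow_le_zpow_iff_right₀ (by norm_num)] at hlength
  omega

end Triadic

section CantorPieces

variable {n k : ℕ}

lemma cantorBase_eq_init (ε : Fin (n + 1) → Bool) :
    cantorBase ε =
      cantorBase (Fin.init ε) + (if ε (Fin.last n) then 2 else 0) * (3 ^ (-(n : ℤ)) / 3) := by
  rw [cantorBase, Fin.sum_univ_castSucc, Fin.val_last, zpow_sub_one₀ three_ne_zero,
    ← div_eq_mul_inv]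
  rfl

lemma cantorPiece_zero (ε : Fin 0 → Bool) : cantorPiece ε = Ico 0 1 := by
  simp [cantorPiece, cantorBase]

lemma cantorPiece_subset_init (ε : Fin (n + 1) → Bool) :
    cantorPiece ε ⊆ cantorPiece (Fin.init ε) := by
  have hpos : (0 : ℝ) < 3 ^ (-(n : ℤ)) := by positivity
  rw [cantorPiece, cantorBase_eq_init, Nat.cast_add_one, three_zpow_neg_add_one]
  apply Ico_subset_Ico <;> split_ifs <;> linarith

lemma cantorPiece_subset_Ico (ε : Fin n → Bool) : cantorPiece ε ⊆ Ico 0 1 := by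
  induction n with
  | zero => exact (cantorPiece_zero ε).subset
  | succ n ih => exact (cantorPiece_subset_init ε).trans (ih _)

lemma exists_cantorPiece_eq_triadic (ε : Fin n → Bool) : ∃ k, cantorPiece ε = triadic n k := by
  suffices hbase : ∃ k : ℕ, cantorBase ε = k * 3 ^ (-(n : ℤ)) by
    obtain ⟨k, hk⟩ := hbase
    exact ⟨k, by rw [cantorPiece, triadic, hk, add_one_mul]⟩
  induction n with
  | zero => exact ⟨0, by simp [cantorBase]⟩
  | succ n ih =>
    obtain ⟨k, hk⟩ := ih (Fin.init ε)
    refine ⟨3 * k + if ε (Fin.last n) then 2 else 0, ?_⟩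
    rw [cantorBase_eq_init, hk, Nat.cast_add_one, three_zpow_neg_add_one]
    push_cast
    ring

lemma measurableSet_cantorPiece (ε : Fin n → Bool) : MeasurableSet (cantorPiece ε) :=
  measurableSet_Ico

lemma pairwise_disjoint_cantorPiece (n : ℕ) :
    Pairwise (Disjoint on (cantorPiece : (Fin n → Bool) → Set ℝ)) := by
  refine fun ε δ hne => disjoint_left.2 fun x hε hδ => hne ?_
  induction n with
  | zero => exact Subsingleton.elim ε δ
  | succ n ih =>
    have hinit : Fin.init ε = Fin.init δ := by
      by_contra h
      exact h (ih _ _ h (cantorPiece_subset_init ε hε) (cantorPiece_subset_init δ hδ))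
    have hpos : (0 : ℝ) < 3 ^ (-(n : ℤ)) := by positivity
    have hlast : ε (Fin.last n) = δ (Fin.last n) := by
      rw [cantorPiece, cantorBase_eq_init, Nat.cast_add_one, three_zpow_neg_add_one] at hε hδ
      rw [hinit] at hε
      cases hεn : ε (Fin.last n) <;> cases hδn : δ (Fin.last n) <;>
        simp only [hεn, hδn, if_true, Bool.false_eq_true, if_false] at hε hδ ⊢ <;>
        linarith [hε.1, hε.2, hδ.1, hδ.2]
    rw [← Fin.snoc_init_self ε, ← Fin.snoc_init_self δ, hinit, hlast]

lemma cantorPiece_subset_cantorN (ε : Fin n → Bool) : cantorPiece ε ⊆ cantorN n :=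
  subset_iUnion _ ε

lemma measurableSet_cantorN (n : ℕ) : MeasurableSet (cantorN n) :=
  MeasurableSet.iUnion measurableSet_cantorPiece

lemma cantorN_antitone : Antitone cantorN :=
  antitone_nat_of_succ_le fun _ => iUnion_subset fun ε =>
    (cantorPiece_subset_init ε).trans (cantorPiece_subset_cantorN _)

lemma cantorN_subset_Ico (n : ℕ) : cantorN n ⊆ Ico 0 1 := iUnion_subset cantorPiece_subset_Ico

lemma exists_cantorPiece_eq_triadic_of_mem {x : ℝ} (hk : x ∈ triadic n k)
    (hx : x ∈ cantorN n) : ∃ ε : Fin n → Bool, cantorPiece ε = triadic n k := by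
  obtain ⟨ε, hε⟩ := mem_iUnion.1 hx
  obtain ⟨i, hi⟩ := exists_cantorPiece_eq_triadic ε
  obtain rfl : i = k := (pairwise_disjoint_triadic n).eq (not_disjoint_iff.2 ⟨x, hi ▸ hε, hk⟩)
  exact ⟨ε, hi⟩

lemma triadic_subset_cantorN_of_mem {x : ℝ} (hk : x ∈ triadic n k) (hx : x ∈ cantorN n) :
    triadic n k ⊆ cantorN n := by
  obtain ⟨ε, hε⟩ := exists_cantorPiece_eq_triadic_of_mem hk hx
  exact hε ▸ cantorPiece_subset_cantorN ε

end CantorPieces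

section Gaps

variable {n : ℕ}

lemma measurableSet_gapPiece (ε : Fin n → Bool) : MeasurableSet (gapPiece ε) := measurableSet_Ico

lemma volume_gapPiece (ε : Fin n → Bool) : volume (gapPiece ε) = 3⁻¹ ^ (n + 1) := by
  rw [gapPiece, Real.volume_Ico, ← ofReal_three_zpow_neg, Nat.cast_add_one]
  ring_nf

lemma gapPiece_subset_cantorPiece (ε : Fin n → Bool) : gapPiece ε ⊆ cantorPiece ε := by
  have hpos : (0 : ℝ) < 3 ^ (-(n : ℤ)) := by positivity
  rw [gapPiece, three_zpow_neg_add_one]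
  apply Ico_subset_Ico <;> linarith

lemma disjoint_gapPiece_cantorN_succ (ε : Fin n → Bool) :
    Disjoint (gapPiece ε) (cantorN (n + 1)) := by
  refine disjoint_iUnion_right.2 fun δ => disjoint_left.2 fun x hε hδ => ?_
  obtain rfl : ε = Fin.init δ := (pairwise_disjoint_cantorPiece n).eq
    (not_disjoint_iff.2 ⟨x, gapPiece_subset_cantorPiece ε hε, cantorPiece_subset_init δ hδ⟩)
  rw [gapPiece, three_zpow_neg_add_one] at hε
  rw [cantorPiece, cantorBase_eq_init, Nat.cast_add_one, three_zpow_neg_add_one] at hδ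
  split_ifs at hδ <;> linarith [hε.1, hε.2, hδ.1, hδ.2]

lemma pairwise_disjoint_gapPiece :
    Pairwise (Disjoint on fun s : Σ m : ℕ, Fin m → Bool => gapPiece s.2) := by
  have hlt : ∀ {m n : ℕ} (ε : Fin m → Bool) (δ : Fin n → Bool), m < n →
      Disjoint (gapPiece ε) (gapPiece δ) := fun ε δ hmn =>
    (disjoint_gapPiece_cantorN_succ ε).mono_right <| (gapPiece_subset_cantorPiece δ).trans <|
      (cantorPiece_subset_cantorN δ).trans (cantorN_antitone hmn)
  rintro ⟨m, ε⟩ ⟨n, δ⟩ hne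
  obtain hmn | rfl | hnm := lt_trichotomy m n
  · exact hlt ε δ hmn
  · have hεδ : ε ≠ δ := by rintro rfl; exact hne rfl
    exact (pairwise_disjoint_cantorPiece m hεδ).mono (gapPiece_subset_cantorPiece ε)
      (gapPiece_subset_cantorPiece δ)
  · exact (hlt δ ε hnm).symm

end Gaps

/-- The law of an infinite sequence of independent fair bits. -/
noncomputable def fairBits : Measure (ℕ → Bool) :=
  Measure.infinitePi fun _ => (PMF.uniformOfFintype Bool).toMeasure

lemma fairBits_pi_singleton (s : Finset ℕ) (ω : ℕ → Bool) :
    fairBits (Set.pi s fun i => {ω i}) = 2⁻¹ ^ s.card := by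
  rw [fairBits, Measure.infinitePi_pi _ fun i _ => measurableSet_singleton (ω i)]
  simp

lemma ae_fairBits_exists_eq_false (n : ℕ) : ∀ᵐ ω ∂fairBits, ∃ i, ω (i + n) = false := by
  have hle (k : ℕ) : fairBits {ω | ¬ ∃ i, ω (i + n) = false} ≤ 2⁻¹ ^ k := by
    have hcard : (Finset.Ico n (n + k)).card = k := by simp
    rw [← hcard, ← fairBits_pi_singleton _ fun _ => true]
    refine measure_mono fun ω hω i hi => ?_
    have htrue : ∀ i, ω (i + n) = true := by simpa using hω
    have hni : n ≤ i := (Finset.mem_Ico.1 hi).1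
    simpa [Nat.sub_add_cancel hni] using htrue (i - n)
  exact nonpos_iff_eq_zero.1 <|
    ge_of_tendsto' (ENNReal.tendsto_pow_atTop_nhds_zero_of_lt_one (by simp)) hle

/-- The point of the Cantor set whose `j`-th ternary digit is `2` if `ω j` holds and `0`
otherwise. -/
noncomputable def ternaryPoint (ω : ℕ → Bool) : ℝ :=
  Real.ofDigits fun i => if ω i then (2 : Fin 3) else 0

lemma continuous_ternaryPoint : Continuous ternaryPoint :=
  Real.continuous_ofDigits.comp <| continuous_pi fun i =>
    (continuous_of_discreteTopology (f := fun b : Bool => if b then (2 : Fin 3) else 0)).comp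
      (continuous_apply i)

lemma ternaryPoint_eq_cantorBase_add (ω : ℕ → Bool) (n : ℕ) :
    ternaryPoint ω = cantorBase (fun i : Fin n => ω i) +
      3 ^ (-(n : ℤ)) * ternaryPoint fun i => ω (i + n) := by
  rw [ternaryPoint, Real.ofDigits_eq_sum_add_ofDigits _ n, Finset.sum_range, cantorBase, zpow_neg,
    zpow_natCast]
  congr 1
  refine Finset.sum_congr rfl fun i _ => ?_
  rw [Real.ofDigitsTerm, ← neg_add', zpow_neg]
  cases ω i <;> simp [← zpow_natCast]

lemma ternaryPoint_lt_one {ω : ℕ → Bool} (hω : ∃ i, ω i = false) : ternaryPoint ω < 1 := by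
  refine (Real.ofDigits_le_one _).lt_of_ne fun h => ?_
  -- `1 = 0.222…` is its only ternary expansion without the digit `1`.
  rw [← Real.ofDigits_const_last_eq_one 2] at h
  have hdigits := ofDigits_zero_two_sequence_unique (fun n => by split_ifs <;> decide)
    (fun _ => by decide) h
  obtain ⟨i, hi⟩ := hω
  simpa [hi] using congrFun hdigits i

lemma ternaryPoint_mem_cantorPiece {ω : ℕ → Bool} {n : ℕ} (hω : ∃ i, ω (i + n) = false) :
    ternaryPoint ω ∈ cantorPiece fun i : Fin n => ω i := by
  have hnonneg : 0 ≤ ternaryPoint fun i => ω (i + n) := Real.ofDigits_nonneg _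
  have hlt : (ternaryPoint fun i => ω (i + n)) < 1 := ternaryPoint_lt_one hω
  have hpos : (0 : ℝ) < 3 ^ (-(n : ℤ)) := by positivity
  rw [ternaryPoint_eq_cantorBase_add ω n]
  constructor <;> nlinarith

/-- The law of a random point with independent uniform ternary digits in `{0, 2}`: the
1/3-Cantor measure. -/
noncomputable def cantorMeasure : Measure ℝ := fairBits.map ternaryPoint

/-- `ν` is the 1/3-Cantor measure: it splits its mass evenly among the components of each `C_n`.
This determines `ν` only on `[0, 1)`, so the complement is required to be null. -/
structure IsCantorMeasure (ν : Measure ℝ) : Prop where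
  measure_cantorPiece {n : ℕ} (ε : Fin n → Bool) : ν (cantorPiece ε) = 2⁻¹ ^ n
  measure_compl_Ico : ν (Ico 0 1)ᶜ = 0

lemma isCantorMeasure_cantorMeasure : IsCantorMeasure cantorMeasure where
  measure_cantorPiece {n} ε := by
    obtain ⟨ω₀, rfl⟩ : ∃ ω₀ : ℕ → Bool, ε = fun i : Fin n => ω₀ i :=
      ⟨Function.extend (↑) ε fun _ => false,
        funext fun i => (Fin.val_injective.extend_apply ..).symm⟩
    have hpre : ternaryPoint ⁻¹' cantorPiece (fun i : Fin n => ω₀ i) =ᵐ[fairBits]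
        Set.pi (Finset.range n) fun i => {ω₀ i} := by
      filter_upwards [ae_fairBits_exists_eq_false n] with ω hω
      have hmem := ternaryPoint_mem_cantorPiece hω
      refine propext ⟨fun h i hi => ?_, fun h => ?_⟩
      · have heq := (pairwise_disjoint_cantorPiece n).eq (not_disjoint_iff.2 ⟨_, hmem, h⟩)
        exact congrFun heq ⟨i, Finset.mem_range.1 hi⟩
      · have heq : (fun i : Fin n => ω i) = fun i : Fin n => ω₀ i :=
          funext fun i => h i (Finset.mem_range.2 i.2)
        exact heq ▸ hmem
    rw [cantorMeasure, Measure.map_apply continuous_ternaryPoint.measurable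
      (measurableSet_cantorPiece _), measure_congr hpre, fairBits_pi_singleton, Finset.card_range]
  measure_compl_Ico := by
    rw [cantorMeasure, Measure.map_apply continuous_ternaryPoint.measurable
      measurableSet_Ico.compl]
    refine ae_iff.1 ((ae_fairBits_exists_eq_false 0).mono fun ω hω => ?_)
    exact cantorPiece_subset_Ico _ (ternaryPoint_mem_cantorPiece hω)

namespace IsCantorMeasure

variable {ν : Measure ℝ}

lemma measure_cantorN (hν : IsCantorMeasure ν) (n : ℕ) : ν (cantorN n) = 1 := by
  rw [cantorN, measure_iUnion (pairwise_disjoint_cantorPiece n) measurableSet_cantorPiece,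
    tsum_fintype]
  simp [hν.measure_cantorPiece, ← mul_pow, ENNReal.mul_inv_cancel]

lemma measure_triadic (hν : IsCantorMeasure ν) {n k : ℕ} (h : triadic n k ⊆ cantorN n) :
    ν (triadic n k) = 2⁻¹ ^ n := by
  obtain ⟨x, hx⟩ := triadic_nonempty n k
  obtain ⟨ε, hε⟩ := exists_cantorPiece_eq_triadic_of_mem hx (h hx)
  rw [← hε, hν.measure_cantorPiece]

lemma isProbabilityMeasure (hν : IsCantorMeasure ν) : IsProbabilityMeasure ν where
  measure_univ := by
    rw [← measure_add_measure_compl measurableSet_Ico, hν.measure_compl_Ico, add_zero,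
      ← cantorPiece_zero Fin.elim0, hν.measure_cantorPiece, pow_zero]

lemma ae_mem_cexCantorSet (hν : IsCantorMeasure ν) : ∀ᵐ x ∂ν, x ∈ cexCantorSet := by
  have := hν.isProbabilityMeasure
  simp only [cexCantorSet, mem_iInter]
  exact ae_all_iff.2 fun n =>
    (mem_ae_iff_prob_eq_one (measurableSet_cantorN n)).2 (hν.measure_cantorN n)

end IsCantorMeasure

lemma cexMu_eq_volume {S : Set ℝ} (hS : S ⊆ Ico 0 1) : cexMu S = volume S :=
  Measure.restrict_eq_self volume hS

lemma cexMu_triadic {n k : ℕ} (h : triadic n k ⊆ cantorN n) : cexMu (triadic n k) = 3⁻¹ ^ n := by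
  rw [cexMu_eq_volume (h.trans (cantorN_subset_Ico n)), volume_triadic]

lemma cexMu_gapPiece {n : ℕ} (ε : Fin n → Bool) : cexMu (gapPiece ε) = 3⁻¹ ^ (n + 1) := by
  rw [cexMu_eq_volume ((gapPiece_subset_cantorPiece ε).trans (cantorPiece_subset_Ico ε)),
    volume_gapPiece]

section Coefficients

variable {p q : ℝ} {m j n k : ℕ}

lemma cexAlpha_rpow_of_subset (h : triadic n k ⊆ cantorN n) :
    cexAlpha p n k ^ q = ((2 / 3) ^ (q / p)) ^ n := by
  have htwo_thirds : ENNReal.ofReal (2 / 3) = 2 / 3 := by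
    rw [ENNReal.ofReal_div_of_pos three_pos, ENNReal.ofReal_ofNat, ENNReal.ofReal_ofNat]
  rw [cexAlpha, if_pos h, ← ENNReal.ofReal_rpow_of_pos (by positivity), htwo_thirds,
    ← ENNReal.rpow_mul, ← ENNReal.rpow_mul_natCast]
  ring_nf

lemma cexAlpha_rpow_le (hq : 0 < q) : cexAlpha p n k ^ q ≤ ((2 / 3) ^ (q / p)) ^ n := by
  by_cases h : triadic n k ⊆ cantorN n
  · exact (cexAlpha_rpow_of_subset h).le
  · simp [cexAlpha, h, hq]

lemma cexAlpha_eq_zero_of_subset (hsub : triadic m j ⊆ triadic n k)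
    (h : ¬ triadic n k ⊆ cantorN n) : cexAlpha p m j = 0 := by
  refine if_neg fun hm => h ?_
  obtain ⟨x, hx⟩ := triadic_nonempty m j
  exact triadic_subset_cantorN_of_mem (hsub hx)
    (cantorN_antitone (le_of_triadic_subset_triadic hsub) (hm hx))

end Coefficients

section Testing

variable {p q : ℝ} {n k : ℕ}

/-- The inner sum `∑_{I ⊆ J} α_I^q 1_I` of the testing condition, for `J = triadic n k`. -/
noncomputable def testingSum (p q : ℝ) (n k : ℕ) (x : ℝ) : ℝ≥0∞ :=
  ∑' mj : ℕ × ℕ, if triadic mj.1 mj.2 ⊆ triadic n k then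
    cexAlpha p mj.1 mj.2 ^ q * (triadic mj.1 mj.2).indicator 1 x else 0

lemma testingSum_eq_zero (hq : 0 < q) (h : ¬ triadic n k ⊆ cantorN n) (x : ℝ) :
    testingSum p q n k x = 0 := by
  refine ENNReal.tsum_eq_zero.2 fun mj => ?_
  split_ifs with hsub
  · rw [cexAlpha_eq_zero_of_subset hsub h, ENNReal.zero_rpow_of_pos hq, zero_mul]
  · rfl

lemma testingSum_le (hq : 0 < q) (x : ℝ) :
    testingSum p q n k x ≤ ((2 / 3) ^ (q / p)) ^ n * (1 - (2 / 3) ^ (q / p))⁻¹ := by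
  rw [testingSum, ENNReal.tsum_prod', ← tsum_ite_le_pow]
  refine ENNReal.tsum_le_tsum fun m => ?_
  calc ∑' j, (if triadic m j ⊆ triadic n k then
        cexAlpha p m j ^ q * (triadic m j).indicator 1 x else 0)
      ≤ ∑' j, (triadic m j).indicator
          (fun _ => if n ≤ m then ((2 / 3) ^ (q / p)) ^ m else 0) x := by
        refine ENNReal.tsum_le_tsum fun j => ?_
        split_ifs with hsub hnm hnm
        · rw [← indicator_const_mul]
          exact indicator_le_indicator (by simpa using cexAlpha_rpow_le hq)
        · exact absurd (le_of_triadic_subset_triadic hsub) hnm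
        all_goals exact zero_le
    _ ≤ if n ≤ m then ((2 / 3) ^ (q / p)) ^ m else 0 :=
        tsum_indicator_le (pairwise_disjoint_triadic m) fun _ => le_rfl

lemma IsCantorMeasure.lintegral_testingSum_le {ν : Measure ℝ} (hν : IsCantorMeasure ν)
    (hq : 0 < q) (hp : 0 < p) (n k : ℕ) :
    ∫⁻ x in triadic n k, testingSum p q n k x ^ (p / q) ∂ν ≤
      ((1 - (2 / 3) ^ (q / p))⁻¹ ^ (1 / q)) ^ p * cexMu (triadic n k) := by
  have hpq : 0 < p / q := div_pos hp hq
  by_cases h : triadic n k ⊆ cantorN n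
  swap
  · simp [testingSum_eq_zero hq h, hpq]
  have hpow : (((2 / 3 : ℝ≥0∞) ^ (q / p)) ^ n) ^ (p / q) = (2 / 3) ^ n := by
    rw [← ENNReal.rpow_mul_natCast, ← ENNReal.rpow_mul, ← ENNReal.rpow_natCast]
    field_simp
  have hthird : (2 / 3 : ℝ≥0∞) * 2⁻¹ = 3⁻¹ := by
    rw [div_eq_mul_inv, mul_right_comm, ENNReal.mul_inv_cancel two_ne_zero ENNReal.ofNat_ne_top,
      one_mul]
  calc ∫⁻ x in triadic n k, testingSum p q n k x ^ (p / q) ∂ν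
      ≤ ∫⁻ _ in triadic n k,
          (((2 / 3) ^ (q / p)) ^ n * (1 - (2 / 3) ^ (q / p))⁻¹) ^ (p / q) ∂ν :=
        lintegral_mono fun x => ENNReal.rpow_le_rpow (testingSum_le hq x) hpq.le
    _ = (1 - (2 / 3) ^ (q / p))⁻¹ ^ (p / q) * ((2 / 3) ^ n * 2⁻¹ ^ n) := by
        rw [setLIntegral_const, hν.measure_triadic h, ENNReal.mul_rpow_of_nonneg _ _ hpq.le, hpow]
        ring
    _ = ((1 - (2 / 3) ^ (q / p))⁻¹ ^ (1 / q)) ^ p * cexMu (triadic n k) := by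
        rw [← mul_pow, hthird, cexMu_triadic h, ← ENNReal.rpow_mul, one_div_mul_eq_div]

end Testing

section Divergence

variable {p q r : ℝ} {n k : ℕ} {x : ℝ}

/-- The inner sum `∑_I (α_I E_I^μ f)^q` of the embedding inequality. -/
noncomputable def embeddingSum (p q : ℝ) (f : ℝ → ℝ≥0∞) (x : ℝ) : ℝ≥0∞ :=
  ∑' mj : ℕ × ℕ, (cexAlpha p mj.1 mj.2 * avgOp cexMu (triadic mj.1 mj.2) f x) ^ q

lemma measurable_cexF : Measurable (cexF p r) :=
  Measurable.tsum fun s => measurable_const.indicator (measurableSet_gapPiece s.2)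

lemma cexF_of_mem_gapPiece {ε : Fin n → Bool} (hx : x ∈ gapPiece ε) :
    cexF p r x =
      ENNReal.ofReal ((3 / 2) ^ (((n : ℝ) + 1) / p) * ((n : ℝ) + 1) ^ (-r)) :=
  tsum_indicator_eq_of_mem (s := fun s : Σ m : ℕ, Fin m → Bool => gapPiece s.2)
    pairwise_disjoint_gapPiece _ (i := ⟨n, ε⟩) hx

lemma lintegral_cexF_rpow (hp : 0 < p) :
    ∫⁻ x, cexF p r x ^ p ∂cexMu =
      2⁻¹ * ∑' m : ℕ, ENNReal.ofReal (((m : ℝ) + 1) ^ (-(r * p))) := by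
  have hvalue (m : ℕ) :
      ENNReal.ofReal ((3 / 2) ^ (((m : ℝ) + 1) / p) * ((m : ℝ) + 1) ^ (-r)) ^ p =
        (3 / 2) ^ (m + 1) * ENNReal.ofReal (((m : ℝ) + 1) ^ (-(r * p))) := by
    rw [ENNReal.ofReal_rpow_of_nonneg (by positivity) hp.le,
      Real.mul_rpow (by positivity) (by positivity), ← Real.rpow_mul (by positivity),
      ← Real.rpow_mul (by positivity), div_mul_cancel₀ _ hp.ne', neg_mul,
      ENNReal.ofReal_mul (by positivity), ← Nat.cast_add_one, Real.rpow_natCast,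
      ENNReal.ofReal_pow (by positivity), ENNReal.ofReal_div_of_pos two_pos, ENNReal.ofReal_ofNat,
      ENNReal.ofReal_ofNat]
  have hmass (m : ℕ) : 2 ^ m * ((3 / 2 : ℝ≥0∞) ^ (m + 1) * 3⁻¹ ^ (m + 1)) = 2⁻¹ := by
    have hhalf : (3 / 2 : ℝ≥0∞) * 3⁻¹ = 2⁻¹ := by
      rw [div_eq_mul_inv, mul_right_comm, ENNReal.mul_inv_cancel (by simp) (by simp), one_mul]
    rw [← mul_pow, hhalf, pow_succ, ← mul_assoc, ← mul_pow,
      ENNReal.mul_inv_cancel (by simp) (by simp), one_pow, one_mul]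
  simp only [cexF, tsum_indicator_rpow hp pairwise_disjoint_gapPiece]
  rw [lintegral_tsum_indicator_const cexMu
    (s := fun s : Σ m : ℕ, Fin m → Bool => gapPiece s.2) fun s => measurableSet_gapPiece s.2,
    ENNReal.tsum_sigma', ← ENNReal.tsum_mul_left]
  refine tsum_congr fun m => ?_
  simp only [cexMu_gapPiece, hvalue, tsum_fintype, Finset.sum_const, Finset.card_univ,
    Fintype.card_fun, Fintype.card_bool, Fintype.card_fin, nsmul_eq_mul]
  rw [← hmass m]
  push_cast
  ring

lemma lintegral_cexF_rpow_ne_top (hp : 0 < p) (hr : 1 < r * p) :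
    ∫⁻ x, cexF p r x ^ p ∂cexMu ≠ ∞ := by
  rw [lintegral_cexF_rpow hp]
  exact ENNReal.mul_ne_top (by simp)
    (tsum_ofReal_natCast_add_one_rpow_ne_top_iff.2 (by linarith))

lemma mul_div_le_avgOp {μ : Measure ℝ} {A I : Set ℝ} {f : ℝ → ℝ≥0∞} {c : ℝ≥0∞}
    (hA : MeasurableSet A) (hAI : A ⊆ I) (hf : ∀ y ∈ A, c ≤ f y) (hx : x ∈ I) :
    c * μ A / μ I ≤ avgOp μ I f x := by
  rw [avgOp, indicator_of_mem hx]
  gcongr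
  calc c * μ A = ∫⁻ _ in A, c ∂μ := (setLIntegral_const A c).symm
    _ ≤ ∫⁻ y in A, f y ∂μ := setLIntegral_mono' hA hf
    _ ≤ ∫⁻ y in I, f y ∂μ := lintegral_mono_set hAI

lemma le_cexAlpha_mul_avgOp_cexF (hp : 0 ≤ p) (h : triadic n k ⊆ cantorN n)
    (hx : x ∈ triadic n k) :
    ENNReal.ofReal (((n : ℝ) + 1) ^ (-r)) * 3⁻¹ ≤
      cexAlpha p n k * avgOp cexMu (triadic n k) (cexF p r) x := by
  obtain ⟨ε, hε⟩ := exists_cantorPiece_eq_triadic_of_mem hx (h hx)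
  set c := (3 / 2 : ℝ) ^ (((n : ℝ) + 1) / p) * ((n : ℝ) + 1) ^ (-r)
  have havg : ENNReal.ofReal c * 3⁻¹ ≤ avgOp cexMu (triadic n k) (cexF p r) x := by
    refine le_of_eq_of_le ?_ (mul_div_le_avgOp (c := ENNReal.ofReal c) (measurableSet_gapPiece ε)
      (hε ▸ gapPiece_subset_cantorPiece ε) (fun y hy => (cexF_of_mem_gapPiece hy).ge) hx)
    rw [cexMu_gapPiece, cexMu_triadic h, pow_succ', ← mul_assoc,
      ENNReal.mul_div_cancel_right (by simp) (by simp)]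
  have hc : ((n : ℝ) + 1) ^ (-r) ≤ (2 / 3) ^ ((n : ℝ) / p) * c := by
    have hone_le : 1 ≤ (2 / 3 : ℝ) ^ ((n : ℝ) / p) * (3 / 2) ^ (((n : ℝ) + 1) / p) := by
      rw [add_div, Real.rpow_add (by norm_num), ← mul_assoc,
        ← Real.mul_rpow (by norm_num) (by norm_num), div_mul_div_cancel₀' two_ne_zero,
        div_self three_ne_zero, Real.one_rpow, one_mul]
      exact Real.one_le_rpow (by norm_num) (by positivity)
    rw [← mul_assoc]
    exact le_mul_of_one_le_left (by positivity) hone_le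
  calc ENNReal.ofReal (((n : ℝ) + 1) ^ (-r)) * 3⁻¹
      ≤ ENNReal.ofReal ((2 / 3) ^ ((n : ℝ) / p) * c) * 3⁻¹ := by gcongr
    _ = cexAlpha p n k * (ENNReal.ofReal c * 3⁻¹) := by
        rw [cexAlpha, if_pos h, ENNReal.ofReal_mul (by positivity), mul_assoc]
    _ ≤ cexAlpha p n k * avgOp cexMu (triadic n k) (cexF p r) x := by gcongr

lemma embeddingSum_cexF_eq_top (hp : 0 ≤ p) (hq : 0 < q) (hr : r * q ≤ 1)
    (hx : x ∈ cexCantorSet) : embeddingSum p q (cexF p r) x = ∞ := by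
  have hdiv : ∑' n : ℕ, (ENNReal.ofReal (((n : ℝ) + 1) ^ (-r)) * 3⁻¹) ^ q = ∞ := by
    have hterm (n : ℕ) : (ENNReal.ofReal (((n : ℝ) + 1) ^ (-r)) * 3⁻¹) ^ q =
        ENNReal.ofReal (((n : ℝ) + 1) ^ (-(r * q))) * 3⁻¹ ^ q := by
      rw [ENNReal.mul_rpow_of_nonneg _ _ hq.le,
        ENNReal.ofReal_rpow_of_nonneg (by positivity) hq.le, ← Real.rpow_mul (by positivity),
        neg_mul]
    have hseries : ∑' n : ℕ, ENNReal.ofReal (((n : ℝ) + 1) ^ (-(r * q))) = ∞ := by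
      by_contra h
      linarith [tsum_ofReal_natCast_add_one_rpow_ne_top_iff.1 h]
    simp_rw [hterm, ENNReal.tsum_mul_right, hseries]
    exact ENNReal.top_mul (by simp)
  rw [embeddingSum, ENNReal.tsum_prod', ← top_le_iff, ← hdiv]
  refine ENNReal.tsum_le_tsum fun n => ?_
  have hxn : x ∈ cantorN n := mem_iInter.1 hx n
  obtain ⟨ε, hε⟩ := mem_iUnion.1 hxn
  obtain ⟨k, hk⟩ := exists_cantorPiece_eq_triadic ε
  rw [hk] at hε
  refine le_trans ?_ (ENNReal.le_tsum k)
  refine ENNReal.rpow_le_rpow ?_ hq.le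
  exact le_cexAlpha_mul_avgOp_cexF hp (triadic_subset_cantorN_of_mem hε hxn) hε

lemma IsCantorMeasure.lintegral_embeddingSum_cexF_eq_top {ν : Measure ℝ} (hν : IsCantorMeasure ν)
    (hp : 0 < p) (hq : 0 < q) (hr : r * q ≤ 1) :
    ∫⁻ x, embeddingSum p q (cexF p r) x ^ (p / q) ∂ν = ∞ := by
  have := hν.isProbabilityMeasure
  have htop : ∀ᵐ x ∂ν, embeddingSum p q (cexF p r) x ^ (p / q) = ∞ :=
    hν.ae_mem_cexCantorSet.mono fun x hx => by
      rw [embeddingSum_cexF_eq_top hp.le hq hr hx, ENNReal.top_rpow_of_pos (div_pos hp hq)]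
  rw [lintegral_congr_ae htop, lintegral_const, measure_univ, mul_one]

end Divergence

theorem counterexample_q_lt_p_general (p q : ℝ) (hq : 0 < q) (hqp : q < p) :
    ∃ ν : Measure ℝ,
      (∀ (n : ℕ) (ε : Fin n → Bool), ν (cantorPiece ε) = (2 : ℝ≥0∞)⁻¹ ^ n) ∧
      ν (Ico (0 : ℝ) 1)ᶜ = 0 ∧
      (∃ C₁ : ℝ≥0∞, C₁ < ∞ ∧ ∀ n k : ℕ,
        ∫⁻ x in triadic n k,
          (∑' mj : ℕ × ℕ, if triadic mj.1 mj.2 ⊆ triadic n k then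
              cexAlpha p mj.1 mj.2 ^ q * (triadic mj.1 mj.2).indicator 1 x
            else 0) ^ (p / q) ∂ν
          ≤ C₁ ^ p * cexMu (triadic n k)) ∧
      ¬ ∃ C : ℝ≥0∞, C < ∞ ∧ ∀ f : ℝ → ℝ≥0∞, Measurable f →
          ∫⁻ x, (∑' mj : ℕ × ℕ,
              (cexAlpha p mj.1 mj.2 * avgOp cexMu (triadic mj.1 mj.2) f x) ^ q)
            ^ (p / q) ∂ν ≤ C ^ p * ∫⁻ x, f x ^ p ∂cexMu := by
  have hp : 0 < p := hq.trans hqp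
  have hν := isCantorMeasure_cantorMeasure
  refine ⟨cantorMeasure, fun _ => hν.measure_cantorPiece, hν.measure_compl_Ico,
    ⟨(1 - (2 / 3) ^ (q / p))⁻¹ ^ (1 / q), ?_, hν.lintegral_testingSum_le hq hp⟩, ?_⟩
  · have hratio : (2 / 3 : ℝ≥0∞) ^ (q / p) < 1 :=
      ENNReal.rpow_lt_one (ENNReal.div_lt_of_lt_mul (by norm_num)) (div_pos hq hp)
    exact ENNReal.rpow_lt_top_of_nonneg (by positivity)
      (ENNReal.inv_lt_top.2 (tsub_pos_of_lt hratio)).ne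
  · rintro ⟨C, hC, hbound⟩
    have hlhs := hν.lintegral_embeddingSum_cexF_eq_top hp hq (inv_mul_cancel₀ hq.ne').le
    have hnorm : ∫⁻ x, cexF p q⁻¹ x ^ p ∂cexMu ≠ ∞ :=
      lintegral_cexF_rpow_ne_top hp (by rwa [inv_mul_eq_div, one_lt_div hq])
    exact ENNReal.mul_ne_top (ENNReal.rpow_lt_top_of_nonneg hp.le hC.ne).ne hnorm <|
      top_le_iff.1 (hlhs.ge.trans (hbound _ measurable_cexF))

/-- **the counterexample.** For every `1 ≤ q < p < ∞` there is a measure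
`ν` (the 1/3-Cantor measure: `ν` gives each component of `C_n` mass `2⁻ⁿ` and vanishes
outside `[0,1)`) such that, with `μ` Lebesgue measure on `[0,1)` and the coefficients
`α_I = (2/3)^{n/p}` on components of `C_n`, the testing condition holds for all tri-adic
intervals with a finite constant `C₁`, yet no finite constant `C` satisfies the
vector-valued inequality. -/
theorem counterexample_q_lt_p (p q : ℝ) (hq : 1 ≤ q) (hqp : q < p) :
    ∃ ν : Measure ℝ,
      (∀ (n : ℕ) (ε : Fin n → Bool), ν (cantorPiece ε) = (2 : ℝ≥0∞)⁻¹ ^ n) ∧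
      ν (Ico (0 : ℝ) 1)ᶜ = 0 ∧
      (∃ C₁ : ℝ≥0∞, C₁ < ∞ ∧ ∀ n k : ℕ,
        ∫⁻ x in triadic n k,
          (∑' mj : ℕ × ℕ, if triadic mj.1 mj.2 ⊆ triadic n k then
              cexAlpha p mj.1 mj.2 ^ q * (triadic mj.1 mj.2).indicator 1 x
            else 0) ^ (p / q) ∂ν
          ≤ C₁ ^ p * cexMu (triadic n k)) ∧
      ¬ ∃ C : ℝ≥0∞, C < ∞ ∧ ∀ f : ℝ → ℝ≥0∞, Measurable f →
          ∫⁻ x, (∑' mj : ℕ × ℕ,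
              (cexAlpha p mj.1 mj.2 * avgOp cexMu (triadic mj.1 mj.2) f x) ^ q)
            ^ (p / q) ∂ν ≤ C ^ p * ∫⁻ x, f x ^ p ∂cexMu :=
  counterexample_q_lt_p_general p q (zero_lt_one.trans_le hq) hqp
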